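/- Let I be an infinite set and Γ = Sym(I). Every subgroup of Γ of index at most |I| contains the pointwise stabilizer Γ_{(U)} of some subset U ⊆ I with |U| < |I|. -/

import Mathlib

/-!
Write `Sym M` for the permutations supported on `M`. A diagonal argument over the cosets of `S`
shows that one of any `|Sym I : S|` disjoint sets `M` has all its permutations induced by `S`;
repeating it inside such an `M` gives an element of `S ∩ Sym M` shifting a sequence of disjoint sets
`W₀ → W₁ → ⋯`. By an infinite swindle each `σ ∈ Sym W₀` is the commutator of this shift with some
`Φ ∈ Sym M`, and `Φ` may be replaced by an element of `S` agreeing with it on `M`. Hence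
`Sym W ≤ S` for some moiety `W` (a set of full size with complement of full size).

There are more than `|I|` moieties with pairwise small intersections. If two of their complements
are images of `W` under permutations in the same left coset of `S`, then some `s ∈ S` makes
`W ∪ s W` co-small, while `W ∩ s W` is large enough for `Sym W` and `Sym (s W)` to generate
`Sym (W ∪ s W)`.
-/

section

open Cardinal Equiv Function Set
open scoped commutatorElement

universe u

variable {α : Type u}

/-! ### Cardinalities of subsets -/

theorem aleph0_le_mk_set_iff {s : Set α} : ℵ₀ ≤ #s ↔ s.Infinite :=
  aleph0_le_mk_iff.trans infinite_coe_iff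

theorem mk_eq_of_superset {A B : Set α} (hA : #A = #α) (h : A ⊆ B) : #B = #α :=
  (mk_set_le B).antisymm (hA ▸ mk_le_mk_of_subset h)

theorem mk_union_le_left_or_right {A B : Set α} (h : (A ∪ B).Infinite) :
    #(A ∪ B : Set α) ≤ #A ∨ #(A ∪ B : Set α) ≤ #B := by
  by_contra! hlt
  exact (mk_union_le A B).not_gt (add_lt_of_lt (aleph0_le_mk_set_iff.2 h) hlt.1 hlt.2)

theorem exists_subset_mk_eq_mk_sdiff_eq {T : Set α} (hT : T.Infinite) :
    ∃ K ⊆ T, #K = #T ∧ #(T \ K : Set α) = #T := by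
  obtain ⟨K, L, rfl, hKL, hcard⟩ := hT.exists_union_disjoint_cardinal_eq_of_infinite
  have hK : #K = #(K ∪ L : Set α) := by
    have hinf : ℵ₀ ≤ #K := by
      by_contra! hlt
      exact hT <| (lt_aleph0_iff_set_finite.1 hlt).union (lt_aleph0_iff_set_finite.1 (hcard ▸ hlt))
    rw [mk_union_of_disjoint hKL, ← hcard, add_eq_self hinf]
  exact ⟨K, subset_union_left, hK, by rw [union_sdiff_cancel_left hKL.le_bot, ← hcard, hK]⟩

theorem exists_pairwise_disjoint_subsets_mk_eq {ι : Type u} {M : Set α} (hM : M.Infinite)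
    (hι : #ι ≤ #M) :
    ∃ N : ι → Set α, Pairwise (Disjoint on N) ∧ ∀ i, N i ⊆ M ∧ #(N i) = #M := by
  have hM' : ℵ₀ ≤ #M := aleph0_le_mk_set_iff.2 hM
  obtain ⟨e⟩ : Nonempty (ι × M ↪ M) := by
    rw [← Cardinal.le_def, mk_prod, lift_id, lift_id]
    exact mul_le_of_le hM' hι le_rfl
  have hinj (i : ι) : Injective fun x : M => (e (i, x) : α) := fun x y h => by
    simpa using e.injective (Subtype.ext h)
  refine ⟨fun i => range fun x : M => (e (i, x) : α), fun i j hij => ?_, fun i =>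
    ⟨range_subset_iff.2 fun x => (e (i, x)).2, mk_range_eq _ (hinj i)⟩⟩
  refine disjoint_left.2 ?_
  rintro _ ⟨x, rfl⟩ ⟨y, hxy⟩
  exact hij (congrArg Prod.fst (e.injective (Subtype.ext hxy))).symm

/-! ### Symmetric groups of subsets -/

/-- The symmetric group of a subset `M` of `α`, as a subgroup of `Perm α`: the permutations fixing
every point outside `M`. -/
def symOn (M : Set α) : Subgroup (Perm α) :=
  fixingSubgroup (Perm α) Mᶜ

theorem mem_symOn {M : Set α} {σ : Perm α} : σ ∈ symOn M ↔ ∀ x ∉ M, σ x = x :=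
  mem_fixingSubgroup_iff _

theorem symOn_mono {M N : Set α} (h : M ⊆ N) : symOn M ≤ symOn N :=
  fixingSubgroup_antitone _ _ (compl_subset_compl.2 h)

theorem apply_mem_iff_of_mem_symOn {M : Set α} {σ : Perm α} (hσ : σ ∈ symOn M) {x : α} :
    σ x ∈ M ↔ x ∈ M := by
  rw [mem_symOn] at hσ
  by_cases hx : x ∈ M
  · refine iff_of_true (by_contra fun h => ?_) hx
    exact h ((σ.injective (hσ _ h)).symm ▸ hx)
  · rw [hσ x hx]

theorem image_eq_of_mem_symOn {M : Set α} {σ : Perm α} (hσ : σ ∈ symOn M) : σ '' M = M := by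
  ext x
  rw [σ.image_eq_preimage_symm]
  exact apply_mem_iff_of_mem_symOn (inv_mem hσ)

theorem map_conj_symOn (M : Set α) (g : Perm α) :
    (symOn M).map (MulAut.conj g).toMonoidHom = symOn (g '' M) :=
  SubMulAction.fixingSubgroup_map_conj_eq (image_compl_eq g.bijective)

theorem conj_mem_symOn_image {M : Set α} {σ : Perm α} (hσ : σ ∈ symOn M) (g : Perm α) :
    g * σ * g⁻¹ ∈ symOn (g '' M) :=
  map_conj_symOn M g ▸ Subgroup.mem_map_of_mem _ hσ

theorem symOn_image_le {S : Subgroup (Perm α)} {M : Set α} (hM : symOn M ≤ S) {g : Perm α}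
    (hg : g ∈ S) : symOn (g '' M) ≤ S := by
  rw [← map_conj_symOn]
  rintro _ ⟨σ, hσ, rfl⟩
  exact mul_mem (mul_mem hg (hM hσ)) (inv_mem hg)

theorem conj_eq_conj_of_eqOn {M : Set α} {f g h : Perm α} (hh : h ∈ symOn M) (hfg : EqOn f g M) :
    f * h * f⁻¹ = g * h * g⁻¹ := by
  have hdisj : (g⁻¹ * f).Disjoint h := fun x => by
    by_cases hx : x ∈ M
    · exact .inl (Perm.inv_eq_iff_eq.2 (hfg hx))
    · exact .inr (mem_symOn.1 hh x hx)
  calc f * h * f⁻¹ = g * (g⁻¹ * f * h) * f⁻¹ := by group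
    _ = g * (h * (g⁻¹ * f)) * f⁻¹ := by rw [hdisj.commute.eq]
    _ = g * h * g⁻¹ := by group

theorem exists_mem_symOn_extend {K L M : Set α} (hK : K ⊆ M) (hL : L ⊆ M) (e : K ≃ L)
    (h : #(M \ K : Set α) = #(M \ L : Set α)) : ∃ p ∈ symOn M, ∀ x : K, p x = e x := by
  classical
  obtain ⟨f⟩ := Cardinal.eq.1 h
  let q : Perm M :=
    (Equiv.Set.sumDiffSubset hK).symm.trans ((e.sumCongr f).trans (Equiv.Set.sumDiffSubset hL))
  refine ⟨Perm.ofSubtype q, mem_symOn.2 fun x hx => Perm.ofSubtype_apply_of_not_mem q hx,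
    fun x => ?_⟩
  rw [Perm.ofSubtype_apply_of_mem q (hK x.2)]
  simp [q, Equiv.Set.sumDiffSubset_symm_apply_of_mem]

theorem exists_mem_symOn_image_eq {K L M : Set α} (hK : K ⊆ M) (hL : L ⊆ M) (hKL : #K = #L)
    (h : #(M \ K : Set α) = #(M \ L : Set α)) : ∃ p ∈ symOn M, p '' K = L := by
  obtain ⟨e⟩ := Cardinal.eq.1 hKL
  obtain ⟨p, hp, hpe⟩ := exists_mem_symOn_extend hK hL e h
  refine ⟨p, hp, ?_⟩
  rw [image_eq_range, funext hpe]
  exact (e.surjective.range_comp ((↑) : L → α)).trans Subtype.range_coe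

theorem exists_mem_symOn_iUnion_eqOn {ι : Type*} {M : ι → Set α} (hM : Pairwise (Disjoint on M))
    {π : ι → Perm α} (hπ : ∀ i, π i ∈ symOn (M i)) :
    ∃ F ∈ symOn (⋃ i, M i), ∀ i, EqOn F (π i) (M i) := by
  classical
  let e : (Σ i, M i) ≃ ⋃ i, M i := (unionEqSigmaOfDisjoint hM).symm
  let q : Perm (⋃ i, M i) := e.permCongr <| sigmaCongrRight fun i =>
    (π i).subtypePerm fun _ => apply_mem_iff_of_mem_symOn (hπ i)
  refine ⟨Perm.ofSubtype q, mem_symOn.2 fun x hx => Perm.ofSubtype_apply_of_not_mem q hx,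
    fun i x hx => ?_⟩
  rw [Perm.ofSubtype_apply_of_mem q (mem_iUnion_of_mem i hx)]
  have hex : (⟨x, mem_iUnion_of_mem i hx⟩ : ⋃ i, M i) = e ⟨i, x, hx⟩ := rfl
  rw [hex, permCongr_apply, symm_apply_apply]
  rfl

/-! ### Generation of the symmetric group of a union -/

theorem exists_subset_eqOn_mem_symOn {P T : Set α} (hT : T.Infinite) (hTP : T ⊆ P)
    (hcard : #P ≤ #T) {σ : Perm α} (hσ : MapsTo σ T P) :
    ∃ K ⊆ T, #K = #T ∧ #(T \ K : Set α) = #T ∧ ∃ p ∈ symOn P, EqOn p σ K := by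
  obtain ⟨K, hKT, hK, hK'⟩ := exists_subset_mk_eq_mk_sdiff_eq hT
  have hσK : #(σ '' (T \ K) : Set α) = #T := by rw [mk_image_eq σ.injective, hK']
  have hdiff : #(P \ K : Set α) = #T :=
    le_antisymm ((mk_le_mk_of_subset sdiff_subset).trans hcard)
      (hK' ▸ mk_le_mk_of_subset (sdiff_subset_sdiff_left hTP))
  have hdiff' : #(P \ σ '' K : Set α) = #T := by
    refine le_antisymm ((mk_le_mk_of_subset sdiff_subset).trans hcard)
      (hσK ▸ mk_le_mk_of_subset ?_)
    rw [image_sdiff σ.injective]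
    exact sdiff_subset_sdiff_left hσ.image_subset
  obtain ⟨p, hp, hpσ⟩ := exists_mem_symOn_extend (hKT.trans hTP) (hσ.mono_left hKT).image_subset
    (σ.image K) (hdiff.trans hdiff'.symm)
  exact ⟨K, hKT, hK, hK', p, hp, fun x hx => hpσ ⟨x, hx⟩⟩

theorem symOn_union_sdiff_le_sup {K M N : Set α} (hKMN : K ⊆ M ∩ N)
    (hK : #(M ∪ N : Set α) ≤ #K) (hK' : #(M ∪ N : Set α) ≤ #((M ∩ N) \ K : Set α)) :
    symOn ((M ∪ N) \ K) ≤ symOn M ⊔ symOn N := by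
  have mk_eq {A : Set α} (hA : A ⊆ M ∪ N) (hA' : #(M ∪ N : Set α) ≤ #A) :
      #A = #(M ∪ N : Set α) := (mk_le_mk_of_subset hA).antisymm hA'
  have hsub : K ∪ N \ M ⊆ N := union_subset (hKMN.trans inter_subset_right) sdiff_subset
  have hNM : N ⊆ M ∪ N := subset_union_right
  -- Enlarging `K` to `K ∪ N \ M` within `N` pushes `(M ∪ N) \ K` into `M`.
  obtain ⟨t, ht, htK⟩ : ∃ t ∈ symOn N, t '' K = K ∪ N \ M := by
    refine exists_mem_symOn_image_eq (hKMN.trans inter_subset_right) hsub ?_ ?_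
    · rw [mk_eq ((subset_union_left.trans hsub).trans hNM) hK, mk_eq (hsub.trans hNM)
        (hK.trans (mk_le_mk_of_subset subset_union_left))]
    · rw [mk_eq (sdiff_subset.trans hNM) (hK'.trans (mk_le_mk_of_subset ?_)),
        mk_eq (sdiff_subset.trans hNM) (hK'.trans (mk_le_mk_of_subset ?_))]
      · exact fun x hx => ⟨hx.1.2, fun h => h.elim hx.2 fun h => h.2 hx.1.1⟩
      · exact sdiff_subset_sdiff_left inter_subset_right
  intro σ hσ
  have hmoved : t '' ((M ∪ N) \ K) ⊆ M := by
    rw [image_sdiff t.injective, image_eq_of_mem_symOn (symOn_mono hNM ht), htK]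
    rintro x ⟨hx | hx, hx'⟩
    · exact hx
    · exact by_contra fun h => hx' (.inr ⟨hx, h⟩)
  have hconj : t * σ * t⁻¹ ∈ symOn M := symOn_mono hmoved (conj_mem_symOn_image hσ t)
  have htS : t ∈ symOn M ⊔ symOn N := Subgroup.mem_sup_right ht
  rw [show σ = t⁻¹ * (t * σ * t⁻¹) * t by group]
  exact mul_mem (mul_mem (inv_mem htS) (Subgroup.mem_sup_left hconj)) htS

theorem symOn_union {M N : Set α} (hinf : (M ∩ N).Infinite)
    (hcard : #(M ∪ N : Set α) ≤ #(M ∩ N : Set α)) : symOn (M ∪ N) = symOn M ⊔ symOn N := by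
  refine le_antisymm (fun σ hσ => ?_)
    (sup_le (symOn_mono subset_union_left) (symOn_mono subset_union_right))
  obtain ⟨P, hP, hPs, hMNP, hT⟩ : ∃ P ⊆ M ∪ N, symOn P ≤ symOn M ⊔ symOn N ∧ M ∩ N ⊆ P ∧
      #(M ∩ N : Set α) ≤ #(M ∩ N ∩ σ ⁻¹' P : Set α) := by
    have hcover : M ∩ N = M ∩ N ∩ σ ⁻¹' M ∪ M ∩ N ∩ σ ⁻¹' N := by
      rw [← inter_union_distrib_left, ← preimage_union, left_eq_inter]
      exact fun x hx => (apply_mem_iff_of_mem_symOn hσ).2 (.inl hx.1)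
    obtain h | h := mk_union_le_left_or_right (hcover ▸ hinf) <;> rw [← hcover] at h
    · exact ⟨M, subset_union_left, le_sup_left, inter_subset_left, h⟩
    · exact ⟨N, subset_union_right, le_sup_right, inter_subset_right, h⟩
  obtain ⟨K, hKT, hK, hK', p, hp, hpσ⟩ := exists_subset_eqOn_mem_symOn
    (T := M ∩ N ∩ σ ⁻¹' P) (P := P) (σ := σ)
    (aleph0_le_mk_set_iff.1 <| (aleph0_le_mk_set_iff.2 hinf).trans hT)
    (inter_subset_left.trans hMNP) ((mk_le_mk_of_subset hP).trans (hcard.trans hT))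
    fun x hx => hx.2
  have hpσ' : p⁻¹ * σ ∈ symOn ((M ∪ N) \ K) := by
    refine mem_symOn.2 fun x hx => Perm.inv_eq_iff_eq.2 ?_
    by_cases hxK : x ∈ K
    · exact (hpσ hxK).symm
    · have hx' : x ∉ M ∪ N := fun h => hx ⟨h, hxK⟩
      rw [mem_symOn.1 hσ x hx', mem_symOn.1 hp x fun h => hx' (hP h)]
  rw [← mul_inv_cancel_left p σ]
  refine mul_mem (hPs hp) (symOn_union_sdiff_le_sup (hKT.trans inter_subset_left)
    (hcard.trans (hT.trans hK.ge)) ((hcard.trans (hT.trans hK'.ge)).trans ?_) hpσ')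
  exact mk_le_mk_of_subset (sdiff_subset_sdiff_left inter_subset_left)

/-! ### Cosets, shifts and commutators -/

theorem exists_coset_forall_exists_eqOn (S : Subgroup (Perm α)) {M : Perm α ⧸ S → Set α}
    (hM : Pairwise (Disjoint on M)) :
    ∃ q, ∀ π ∈ symOn (M q), ∃ g ∈ S ⊓ symOn (⋃ q, M q), EqOn g π (M q) := by
  obtain ⟨q, hq⟩ : ∃ q, ∀ π ∈ symOn (M q), ∃ h ∈ symOn (⋃ q, M q),
      (h : Perm α ⧸ S) = q ∧ EqOn h π (M q) := by
    by_contra! hbad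
    choose π hπ hbad using hbad
    obtain ⟨F, hF, hFπ⟩ := exists_mem_symOn_iUnion_eqOn hM hπ
    exact hbad F F hF rfl (hFπ F)
  refine ⟨q, fun π hπ => ?_⟩
  obtain ⟨f, hf, hfq, hf_one⟩ := hq 1 (one_mem _)
  obtain ⟨h, hh, hhq, hhπ⟩ := hq π hπ
  have hfhS : f⁻¹ * h ∈ S := QuotientGroup.eq.1 (hfq.trans hhq.symm)
  refine ⟨f⁻¹ * h, Subgroup.mem_inf.2 ⟨hfhS, mul_mem (inv_mem hf) hh⟩,
    fun x hx => Perm.inv_eq_iff_eq.2 ?_⟩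
  rw [hhπ hx, hf_one ((apply_mem_iff_of_mem_symOn hπ).2 hx), Perm.one_apply]

theorem exists_commutator_eq {h σ : Perm α} {W : ℕ → Set α} (hW : Pairwise (Disjoint on W))
    (hh : ∀ k, h '' W k = W (k + 1)) (hσ : σ ∈ symOn (W 0)) :
    ∃ Φ ∈ symOn (⋃ k, W k), ⁅Φ, h⁆ = σ := by
  have hpow (k : ℕ) : (h ^ k) '' W 0 = W k := by
    induction k with
    | zero => simp
    | succ k ih => rw [pow_succ', Perm.coe_mul, image_comp, ih, hh]
  have hconj (k : ℕ) : h ^ k * σ * (h ^ k)⁻¹ ∈ symOn (W k) :=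
    hpow k ▸ conj_mem_symOn_image hσ (h ^ k)
  -- Conjugation by `h` carries the piece of `Φ` on `W k` to its piece on `W (k + 1)`, so `Φ` and
  -- `h * Φ * h⁻¹` differ only by the piece `σ` on `W 0`.
  obtain ⟨Φ, hΦ, hΦW⟩ := exists_mem_symOn_iUnion_eqOn hW hconj
  have hstep (k : ℕ) {y : α} (hy : y ∈ W k) : Φ (h y) = h (Φ y) := by
    rw [hΦW (k + 1) (hh k ▸ mem_image_of_mem h hy), hΦW k hy]
    simp [pow_succ']
  have hcomm : Φ * h = σ * h * Φ := by
    ext y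
    simp only [Perm.mul_apply]
    by_cases hy : y ∈ ⋃ k, W k
    · obtain ⟨k, hyk⟩ := mem_iUnion.1 hy
      have hΦy : Φ y ∈ W k := hΦW k hyk ▸ (apply_mem_iff_of_mem_symOn (hconj k)).2 hyk
      rw [hstep k hyk, mem_symOn.1 hσ _ fun h0 => ?_]
      exact (hW k.succ_ne_zero).le_bot ⟨hh k ▸ mem_image_of_mem h hΦy, h0⟩
    · rw [mem_symOn.1 hΦ y hy]
      by_cases h0 : h y ∈ W 0
      · simpa using hΦW 0 h0
      · rw [mem_symOn.1 hσ _ h0]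
        refine mem_symOn.1 hΦ _ fun hmem => ?_
        obtain ⟨_ | k, hk⟩ := mem_iUnion.1 hmem
        · exact h0 hk
        · rw [← hh, h.injective.mem_set_image] at hk
          exact hy (mem_iUnion_of_mem k hk)
  refine ⟨Φ, hΦ, ?_⟩
  rw [commutatorElement_def, hcomm]
  group

theorem exists_shift {M : Set α} (hM : M.Infinite) :
    ∃ t ∈ symOn M, ∃ W : ℕ → Set α, Pairwise (Disjoint on W) ∧
      (∀ k, W k ⊆ M ∧ #(W k) = #M) ∧ ∀ k, t '' W k = W (k + 1) := by
  classical
  obtain ⟨e⟩ : Nonempty (ℤ × M ≃ M) := by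
    rw [← Cardinal.eq, mk_prod, mk_int, lift_aleph0, lift_uzero,
      aleph0_mul_eq (aleph0_le_mk_set_iff.2 hM)]
  let row (n : ℤ) : Set α := range fun x : M => (e (n, x) : α)
  let t : Perm α := Perm.ofSubtype (e.permCongr ((Equiv.addRight (1 : ℤ)).prodCongr (.refl M)))
  have ht (n : ℤ) (x : M) : t (e (n, x)) = e (n + 1, x) := by
    simp [t, Perm.ofSubtype_apply_coe]
  refine ⟨t, mem_symOn.2 fun x hx => Perm.ofSubtype_apply_of_not_mem _ hx, fun k => row k,
    fun i j hij => disjoint_left.2 ?_, fun k => ⟨range_subset_iff.2 fun x => (e (k, x)).2,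
    mk_range_eq _ fun x y h => ?_⟩, fun k => ?_⟩
  · rintro _ ⟨x, rfl⟩ ⟨y, hxy⟩
    have := congrArg Prod.fst (e.injective (Subtype.ext hxy))
    exact hij (Nat.cast_injective this).symm
  · simpa using e.injective (Subtype.ext h)
  · simp only [row, ← range_comp, comp_def, ht, Nat.cast_add, Nat.cast_one]

/-! ### Moieties -/

/-- A moiety of `α`: a subset which, like its complement, has the cardinality of `α`. -/
def IsMoiety (A : Set α) : Prop :=
  #A = #α ∧ #(Aᶜ : Set α) = #α

theorem IsMoiety.compl {A : Set α} (hA : IsMoiety A) : IsMoiety Aᶜ :=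
  ⟨hA.2, by rw [compl_compl, hA.1]⟩

theorem IsMoiety.exists_perm_image_eq {A B : Set α} (hA : IsMoiety A) (hB : IsMoiety B) :
    ∃ p : Perm α, p '' A = B := by
  obtain ⟨p, -, hp⟩ := exists_mem_symOn_image_eq (subset_univ A) (subset_univ B)
    (hA.1.trans hB.1.symm) (by
      rw [← compl_eq_univ_sdiff, ← compl_eq_univ_sdiff, hA.2, hB.2])
  exact ⟨p, hp⟩

theorem exists_isMoiety_symOn_le [Infinite α] {S : Subgroup (Perm α)}
    (hS : #(Perm α ⧸ S) ≤ #α) : ∃ W : Set α, IsMoiety W ∧ symOn W ≤ S := by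
  obtain ⟨M, hM, hMα⟩ := exists_pairwise_disjoint_subsets_mk_eq (M := (univ : Set α))
    infinite_univ (hS.trans_eq mk_univ.symm)
  simp only [mk_univ, subset_univ, true_and] at hMα
  obtain ⟨q, hq⟩ := exists_coset_forall_exists_eqOn S hM
  have hMinf : (M q).Infinite := aleph0_le_mk_set_iff.1 <| hMα q ▸ aleph0_le_mk α
  obtain ⟨N, hN, hNM⟩ := exists_pairwise_disjoint_subsets_mk_eq hMinf (hS.trans_eq (hMα q).symm)
  obtain ⟨r, hr⟩ := exists_coset_forall_exists_eqOn S hN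
  have hNinf : (N r).Infinite :=
    aleph0_le_mk_set_iff.1 <| (hNM r).2.trans (hMα q) ▸ aleph0_le_mk α
  obtain ⟨t, ht, W, hW, hWN, htW⟩ := exists_shift hNinf
  obtain ⟨h, ⟨hhS, hhN⟩, hht⟩ := hr t ht
  have hWα (k : ℕ) : #(W k) = #α := (hWN k).2.trans ((hNM r).2.trans (hMα q))
  have hhW (k : ℕ) : h '' W k = W (k + 1) := by
    rw [← htW, (hht.mono (hWN k).1).image_eq]
  have hhM : h ∈ symOn (M q) := symOn_mono (iUnion_subset fun i => (hNM i).1) hhN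
  refine ⟨W 0, ⟨hWα 0, mk_eq_of_superset (hWα 1) ?_⟩, fun σ hσ => ?_⟩
  · exact (hW one_ne_zero).subset_compl_right
  obtain ⟨Φ, hΦ, rfl⟩ := exists_commutator_eq hW hhW hσ
  have hΦM : Φ ∈ symOn (M q) :=
    symOn_mono (iUnion_subset fun k => (hWN k).1.trans (hNM r).1) hΦ
  obtain ⟨g, ⟨hgS, -⟩, hgΦ⟩ := hq Φ hΦM
  rw [commutatorElement_def, ← conj_eq_conj_of_eqOn hhM hgΦ]
  exact mul_mem (mul_mem (mul_mem hgS hhS) (inv_mem hgS)) (inv_mem hhS)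

/-! ### Almost disjoint moieties -/

theorem exists_forall_mk_setOf_eq_lt [Infinite α] {F : Set (α → α)} (hF : #F ≤ #α) :
    ∃ f : α → α, ∀ g ∈ F, #{x | f x = g x} < #α := by
  obtain ⟨r, hr, hr'⟩ := exists_rel_mk_fibers_lt α
  obtain ⟨e⟩ := hF
  have havoid (x : α) : ∃ y, ∀ g : F, ¬ r x (e g) → y ≠ g.1 x := by
    by_contra! h
    choose G hG hGx using h
    refine (hr x).not_ge (mk_le_of_injective (f := fun y => ⟨e (G y), hG y⟩) fun y z hyz => ?_)
    rw [hGx y, hGx z, e.injective (congrArg Subtype.val hyz)]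
  choose f hf using havoid
  refine ⟨f, fun g hg => (mk_le_mk_of_subset fun x hx => ?_).trans_lt (hr' (e ⟨g, hg⟩))⟩
  exact by_contra fun hrx => hf x ⟨g, hg⟩ hrx hx

theorem exists_pairwise_mk_setOf_eq_lt (α : Type u) [Infinite α] :
    ∃ F : Set (α → α), #α < #F ∧ F.Pairwise fun f g => #{x | f x = g x} < #α := by
  let r (f g : α → α) : Prop := #{x | f x = g x} < #α
  have r_symm {f g : α → α} (h : r f g) : r g f := by simpa only [r, eq_comm] using h
  obtain ⟨hchain, hmax⟩ := maxChain_spec (r := r)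
  refine ⟨maxChain r, ?_, fun f hf g hg hfg => (hchain hf hg hfg).elim id r_symm⟩
  by_contra! hsmall
  obtain ⟨f, hf⟩ := exists_forall_mk_setOf_eq_lt hsmall
  have hmem : f ∈ maxChain r := by
    rw [hmax (hchain.insert fun g hg _ => .inl (hf g hg)) (subset_insert f _)]
    exact mem_insert f _
  simpa using hf f hmem

theorem exists_almostDisjoint_moieties (α : Type u) [Infinite α] :
    ∃ 𝒜 : Set (Set α), #α < #𝒜 ∧ (∀ A ∈ 𝒜, IsMoiety A) ∧
      𝒜.Pairwise fun A B => #(A ∩ B : Set α) < #α ∧ #((A ∪ B)ᶜ : Set α) = #α := by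
  obtain ⟨e⟩ : Nonempty (α × Option α ≃ α) := by
    rw [← Cardinal.eq, mk_prod, mk_option, lift_id, lift_id, add_one_eq (aleph0_le_mk α),
      mul_eq_self (aleph0_le_mk α)]
  let graph (f : α → α) : Set α := range fun x => e (x, some (f x))
  let rest : Set α := range fun x => e (x, none)
  have mk_graph (f : α → α) : #(graph f) = #α :=
    mk_range_eq _ fun x y h => congrArg Prod.fst (e.injective h)
  have mk_rest : #rest = #α := mk_range_eq _ fun x y h => by simpa using h
  have rest_subset (f : α → α) : rest ⊆ (graph f)ᶜ := by
    rintro _ ⟨x, rfl⟩ ⟨y, hy⟩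
    simp at hy
  have mk_inter (f g : α → α) : #(graph f ∩ graph g : Set α) ≤ #{x | f x = g x} := by
    refine (mk_le_mk_of_subset ?_).trans (mk_image_le (f := fun x => e (x, some (f x))))
    rintro _ ⟨⟨x, rfl⟩, ⟨y, hy⟩⟩
    obtain ⟨rfl, hy⟩ : y = x ∧ g y = f x := by simpa using hy
    exact ⟨y, hy.symm, rfl⟩
  have graph_injective : Injective graph := fun f g h => by
    ext x
    obtain ⟨y, hy⟩ : e (x, some (f x)) ∈ graph g := h ▸ mem_range_self x
    obtain ⟨rfl, hy⟩ : y = x ∧ g y = f x := by simpa using hy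
    exact hy.symm
  obtain ⟨F, hF, hFpair⟩ := exists_pairwise_mk_setOf_eq_lt α
  refine ⟨graph '' F, by rwa [mk_image_eq graph_injective], ?_,
    graph_injective.injOn.pairwise_image.2 fun f hf g hg hfg =>
      ⟨(mk_inter f g).trans_lt (hFpair hf hg hfg), mk_eq_of_superset mk_rest ?_⟩⟩
  · rintro _ ⟨f, -, rfl⟩
    exact ⟨mk_graph f, mk_eq_of_superset mk_rest (rest_subset f)⟩
  · rw [compl_union]
    exact subset_inter (rest_subset f) (rest_subset g)

theorem exists_mem_mk_compl_union_image_lt [Infinite α] {S : Subgroup (Perm α)}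
    (hS : #(Perm α ⧸ S) ≤ #α) {W : Set α} (hW : IsMoiety W) :
    ∃ s ∈ S, #((W ∪ s '' W)ᶜ : Set α) < #α ∧ #(W ∩ s '' W : Set α) = #α := by
  obtain ⟨𝒜, h𝒜, hmoiety, hpair⟩ := exists_almostDisjoint_moieties α
  choose f hf using fun A : 𝒜 => hW.exists_perm_image_eq (hmoiety A A.2).compl
  obtain ⟨A, B, hAB, hne⟩ : ∃ A B : 𝒜, (f A : Perm α ⧸ S) = f B ∧ A ≠ B := by
    by_contra! hinj
    exact (hS.trans_lt h𝒜).not_ge (mk_le_of_injective hinj)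
  obtain ⟨hinter, hunion⟩ := hpair A.2 B.2 (Subtype.coe_ne_coe.2 hne)
  let s : Perm α := (f A)⁻¹ * f B
  have hsW : f A '' (s '' W) = (B : Set α)ᶜ := by
    rw [← image_comp, ← Perm.coe_mul, mul_inv_cancel_left, hf]
  refine ⟨s, QuotientGroup.eq.1 hAB, ?_, ?_⟩
  · rwa [← mk_image_eq (f A).injective, image_compl_eq (f A).bijective, image_union, hf, hsW,
      ← compl_inter, compl_compl]
  · rwa [← mk_image_eq (f A).injective, image_inter (f A).injective, hf, hsW, ← compl_union]

end

/-- Dixon–Neumann–Thomas: for an infinite set `I`, every subgroup of `Sym I` of index at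
most `|I|` contains the pointwise stabilizer of some subset `U ⊆ I` with `|U| < |I|`. -/
theorem stmt_14 {I : Type*} [Infinite I]
    (S : Subgroup (Equiv.Perm I))
    (hS : Cardinal.mk (Equiv.Perm I ⧸ S) ≤ Cardinal.mk I) :
    ∃ U : Set I, Cardinal.mk U < Cardinal.mk I ∧
      ∀ σ : Equiv.Perm I, (∀ u ∈ U, σ u = u) → σ ∈ S := by
  obtain ⟨W, hW, hWS⟩ := exists_isMoiety_symOn_le hS
  obtain ⟨s, hs, hsmall, hlarge⟩ := exists_mem_mk_compl_union_image_lt hS hW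
  have hinf : (W ∩ s '' W).Infinite := aleph0_le_mk_set_iff.1 <| hlarge ▸ Cardinal.aleph0_le_mk I
  have hle : symOn (W ∪ s '' W) ≤ S := by
    rw [symOn_union hinf ((Cardinal.mk_set_le _).trans hlarge.ge)]
    exact sup_le hWS (symOn_image_le hWS hs)
  exact ⟨(W ∪ s '' W)ᶜ, hsmall, fun σ hσ => hle (mem_symOn.2 hσ)⟩
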